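/- Let 𝕋 be a compact time scale with minimum t₀ = min 𝕋, let q₀ ∈ ℝⁿ, and let f: ℝⁿ × 𝕋\{max 𝕋} → ℝⁿ be a Δ-Carathéodory function satisfying (H∞) and globally Lipschitz continuous with constant L ≥ 0 (i.e. ‖f(x₁,t) − f(x₂,t)‖ ≤ L‖x₁ − x₂‖ for all x₁,x₂ ∈ ℝⁿ and Δ-a.e. t). Define F: C(𝕋,ℝⁿ) → C(𝕋,ℝⁿ) by F(q)(t) = q₀ + ∫_{[t₀,t)_𝕋} f(q(τ),τ) Δτ. Then for every k ≥ 1, all q₁,q₂ ∈ C(𝕋,ℝⁿ) and every t ∈ 𝕋, ‖F^k(q₁)(t) − F^k(q₂)(t)‖ ≤ (L^k/k!)·‖q₁ − q₂‖_∞·(t − t₀)^k, where ‖·‖_∞ is the sup norm on C(𝕋,ℝⁿ) and F^k is the k-th iterate of F. -/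

import Mathlib

/-!
The estimate is the usual Picard iteration bound, proved by induction on the number of iterations.
If `‖p₁ s - p₂ s‖ ≤ c (s - t₀)^k` on the time scale, the Lipschitz condition gives
`‖F p₁ t - F p₂ t‖ ≤ ∫_{[t₀,t)_𝕋} L c (τ - t₀)^k Δτ`, and it remains to bound the Δ-integral of
`(τ - t₀)^k` by `(t - t₀)^(k+1) / (k+1)`.

This holds because, for monotone `h`, the Δ-integral over `[a,b)_𝕋` is at most the Lebesgue integral
over `[a,b)` (`setLIntegral_delta_le`): at a right-scattered point `r` the atom contributes
`(σ(r) - r) h(r) ≤ ∫_{(r,σ(r))} h`, and the gaps `(r,σ(r))` are disjoint from each other and from `𝕋`.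

To split `F p₁ t - F p₂ t` as one integral, both integrands must be integrable, so the induction also
carries continuity of the iterates on `𝕋`. Measurability of `τ ↦ f (q τ) τ` is the Carathéodory
argument (`aemeasurable_caratheodory`), boundedness comes from (H∞) on the compact set `q(𝕋)`, and
`F q` is continuous since it is Lipschitz with the same bound (`continuousOn_picard`).
-/

open MeasureTheory Set Filter Classical

noncomputable section
open scoped Classical

/-- The forward jump operator `σ` of a time scale `T`. -/
def tsSigma (T : Set ℝ) (t : ℝ) : ℝ :=
  if ({s | s ∈ T ∧ t < s}).Nonempty then sInf {s | s ∈ T ∧ t < s} else t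

/-- The backward jump operator `ρ` of a time scale `T`. -/
def tsRho (T : Set ℝ) (t : ℝ) : ℝ :=
  if ({s | s ∈ T ∧ s < t}).Nonempty then sSup {s | s ∈ T ∧ s < t} else t

/-- The graininess function `μ(t) = σ(t) - t`. -/
def tsGrain (T : Set ℝ) (t : ℝ) : ℝ := tsSigma T t - t

/-- `t` is a right-scattered point of `T`. -/
def RightScattered (T : Set ℝ) (t : ℝ) : Prop := t < tsSigma T t

/-- `t` is a right-dense point of `T`. -/
def RightDense (T : Set ℝ) (t : ℝ) : Prop := tsSigma T t = t

/-- `t` is a left-scattered point of `T`. -/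
def LeftScattered (T : Set ℝ) (t : ℝ) : Prop := tsRho T t < t

/-- `t` is a left-dense point of `T`. -/
def LeftDense (T : Set ℝ) (t : ℝ) : Prop := tsRho T t = t

/-- `𝕋 \ {sup 𝕋}`: the time scale minus its maximum (if the maximum exists). -/
def tsUpDomain (T : Set ℝ) : Set ℝ := {t | t ∈ T ∧ ¬ IsGreatest T t}

/-- The Lebesgue Δ-measure on the time scale `T`: Lebesgue measure restricted to `T`
plus `Σ_{r ∈ ℛ} μ(r)·δ_r` over right-scattered points `r`. -/
def deltaMeasure (T : Set ℝ) : Measure ℝ :=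
  volume.restrict T +
    Measure.sum (fun r : {t : ℝ // t ∈ T ∧ RightScattered T t} =>
      ENNReal.ofReal (tsGrain T r.1) • Measure.dirac r.1)

/-- Δ-differentiability of `q` at `t`, with Δ-derivative `q'`. -/
def HasDeltaDerivAt {n : ℕ} (T : Set ℝ) (q : ℝ → EuclideanSpace ℝ (Fin n))
    (q' : EuclideanSpace ℝ (Fin n)) (t : ℝ) : Prop :=
  ∀ ε > (0:ℝ), ∃ U ∈ nhds t, ∀ s ∈ U ∩ T,
    ‖q (tsSigma T t) - q s - (tsSigma T t - s) • q'‖ ≤ ε * |tsSigma T t - s|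

/-- Absolute continuity of `q` on `[a,b]_𝕋`. -/
def DeltaAC {n : ℕ} (T : Set ℝ) (a b : ℝ) (q : ℝ → EuclideanSpace ℝ (Fin n)) : Prop :=
  ∀ ε > (0:ℝ), ∃ δ > (0:ℝ), ∀ (m : ℕ) (u v : ℕ → ℝ),
    (∀ k < m, u k ∈ Icc a b ∩ T) → (∀ k < m, v k ∈ Icc a b ∩ T) →
    (∀ k < m, u k ≤ v k) →
    (∀ i < m, ∀ j < m, i ≠ j → Disjoint (Icc (u i) (v i)) (Icc (u j) (v j))) →
    (∑ k ∈ Finset.range m, (v k - u k)) < δ →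
    (∑ k ∈ Finset.range m, ‖q (v k) - q (u k)‖) < ε

/-- `f` is a Δ-Carathéodory function on `Ω × 𝕋\{sup 𝕋}`. -/
def DeltaCaratheodory {n : ℕ} (T : Set ℝ) (Ω : Set (EuclideanSpace ℝ (Fin n)))
    (f : EuclideanSpace ℝ (Fin n) → ℝ → EuclideanSpace ℝ (Fin n)) : Prop :=
  (∀ x ∈ Ω, AEMeasurable (fun t => f x t) ((deltaMeasure T).restrict (tsUpDomain T))) ∧
    ∀ᵐ t ∂((deltaMeasure T).restrict (tsUpDomain T)), ContinuousOn (fun x => f x t) Ω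

/-- Hypothesis (H∞): `f` is locally bounded. -/
def HInfty {n : ℕ} (T : Set ℝ) (Ω : Set (EuclideanSpace ℝ (Fin n)))
    (f : EuclideanSpace ℝ (Fin n) → ℝ → EuclideanSpace ℝ (Fin n)) : Prop :=
  ∀ K : Set (EuclideanSpace ℝ (Fin n)), K ⊆ Ω → IsCompact K →
    ∀ a ∈ T, ∀ b ∈ T, a < b →
      ∃ M : ℝ, 0 ≤ M ∧
        ∀ᵐ t ∂((deltaMeasure T).restrict (Ico a b ∩ T)), ∀ x ∈ K, ‖f x t‖ ≤ M

/-- Hypothesis (H^rd_loc-Lip): local Lipschitz continuity at right-dense points. -/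
def HrdLocLip {n : ℕ} (T : Set ℝ) (Ω : Set (EuclideanSpace ℝ (Fin n)))
    (f : EuclideanSpace ℝ (Fin n) → ℝ → EuclideanSpace ℝ (Fin n)) : Prop :=
  ∀ xb ∈ Ω, ∀ tb ∈ T, ¬ IsGreatest T tb → RightDense T tb →
    ∃ R > (0:ℝ), ∃ δ > (0:ℝ), ∃ L : ℝ, 0 ≤ L ∧
      Metric.closedBall xb R ⊆ Ω ∧ tb + δ ∈ T ∧
      ∀ᵐ t ∂((deltaMeasure T).restrict (Ico tb (tb + δ) ∩ T)),
        ∀ x₁ ∈ Metric.closedBall xb R, ∀ x₂ ∈ Metric.closedBall xb R,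
          ‖f x₁ t - f x₂ t‖ ≤ L * ‖x₁ - x₂‖

/-- Hypothesis (H^ld_loc-Lip): local Lipschitz continuity at left-dense points. -/
def HldLocLip {n : ℕ} (T : Set ℝ) (Ω : Set (EuclideanSpace ℝ (Fin n)))
    (f : EuclideanSpace ℝ (Fin n) → ℝ → EuclideanSpace ℝ (Fin n)) : Prop :=
  ∀ xb ∈ Ω, ∀ tb ∈ T, ¬ IsLeast T tb → LeftDense T tb →
    ∃ R > (0:ℝ), ∃ δ > (0:ℝ), ∃ L : ℝ, 0 ≤ L ∧
      Metric.closedBall xb R ⊆ Ω ∧ tb - δ ∈ T ∧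
      ∀ᵐ t ∂((deltaMeasure T).restrict (Ico (tb - δ) tb ∩ T)),
        ∀ x₁ ∈ Metric.closedBall xb R, ∀ x₂ ∈ Metric.closedBall xb R,
          ‖f x₁ t - f x₂ t‖ ≤ L * ‖x₁ - x₂‖

/-- Hypothesis (H^forw_stab): `G⁺(t) : x ↦ x + μ(t) f(x,t)` maps `Ω` into `Ω`. -/
def HforwStab {n : ℕ} (T : Set ℝ) (Ω : Set (EuclideanSpace ℝ (Fin n)))
    (f : EuclideanSpace ℝ (Fin n) → ℝ → EuclideanSpace ℝ (Fin n)) : Prop :=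
  ∀ t ∈ T, RightScattered T t → ∀ x ∈ Ω, x + tsGrain T t • f x t ∈ Ω

/-- Hypothesis (H^back_regr): `G⁺(t)` is a bijection from `Ω` onto `ℝⁿ`. -/
def HbackRegr {n : ℕ} (T : Set ℝ) (Ω : Set (EuclideanSpace ℝ (Fin n)))
    (f : EuclideanSpace ℝ (Fin n) → ℝ → EuclideanSpace ℝ (Fin n)) : Prop :=
  ∀ t ∈ T, RightScattered T t → Set.BijOn (fun x => x + tsGrain T t • f x t) Ω univ

/-- Hypothesis (H^back_stab): `G⁻(t) : x ↦ x - μ(t) f(x,t)` maps `Ω` into `Ω`. -/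
def HbackStab {n : ℕ} (T : Set ℝ) (Ω : Set (EuclideanSpace ℝ (Fin n)))
    (f : EuclideanSpace ℝ (Fin n) → ℝ → EuclideanSpace ℝ (Fin n)) : Prop :=
  ∀ t ∈ T, RightScattered T t → ∀ x ∈ Ω, x - tsGrain T t • f x t ∈ Ω

/-- Hypothesis (H^forw_regr): `G⁻(t)` is a bijection from `Ω` onto `ℝⁿ`. -/
def HforwRegr {n : ℕ} (T : Set ℝ) (Ω : Set (EuclideanSpace ℝ (Fin n)))
    (f : EuclideanSpace ℝ (Fin n) → ℝ → EuclideanSpace ℝ (Fin n)) : Prop :=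
  ∀ t ∈ T, RightScattered T t → Set.BijOn (fun x => x - tsGrain T t • f x t) Ω univ

/-- Hypothesis (H^glob_Lip): global Lipschitz continuity. -/
def HglobLip {n : ℕ} (T : Set ℝ) (Ω : Set (EuclideanSpace ℝ (Fin n)))
    (f : EuclideanSpace ℝ (Fin n) → ℝ → EuclideanSpace ℝ (Fin n)) : Prop :=
  ∃ L : ℝ, 0 ≤ L ∧
    ∀ᵐ t ∂((deltaMeasure T).restrict (tsUpDomain T)),
      ∀ x₁ ∈ Ω, ∀ x₂ ∈ Ω, ‖f x₁ t - f x₂ t‖ ≤ L * ‖x₁ - x₂‖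

/-- The relation `a ⊴ t₀ ⊴ b`. -/
def Trile (T : Set ℝ) (t₀ a b : ℝ) : Prop :=
  (IsLeast T t₀ ∧ a = t₀ ∧ t₀ < b) ∨
  (IsGreatest T t₀ ∧ a < t₀ ∧ t₀ = b) ∨
  (¬ IsLeast T t₀ ∧ ¬ IsGreatest T t₀ ∧ a < t₀ ∧ t₀ < b)

/-- `(q, [a,b]_𝕋)` is a solution of the non shifted Δ-Cauchy problem (Δ-CP). -/
def IsSolIcc {n : ℕ} (T : Set ℝ) (Ω : Set (EuclideanSpace ℝ (Fin n)))
    (f : EuclideanSpace ℝ (Fin n) → ℝ → EuclideanSpace ℝ (Fin n))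
    (t₀ : ℝ) (q₀ : EuclideanSpace ℝ (Fin n))
    (q : ℝ → EuclideanSpace ℝ (Fin n)) (a b : ℝ) : Prop :=
  (∀ t ∈ Icc a b ∩ T, q t ∈ Ω) ∧ DeltaAC T a b q ∧ q t₀ = q₀ ∧
    ∀ᵐ t ∂((deltaMeasure T).restrict (Ico a b ∩ T)),
      HasDeltaDerivAt T q (f (q t) t) t

/-- `(q, [a,b]_𝕋)` is a solution of the shifted Δ-Cauchy problem (Δ-CP^σ). -/
def IsSolIccS {n : ℕ} (T : Set ℝ) (Ω : Set (EuclideanSpace ℝ (Fin n)))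
    (f : EuclideanSpace ℝ (Fin n) → ℝ → EuclideanSpace ℝ (Fin n))
    (t₀ : ℝ) (q₀ : EuclideanSpace ℝ (Fin n))
    (q : ℝ → EuclideanSpace ℝ (Fin n)) (a b : ℝ) : Prop :=
  (∀ t ∈ Icc a b ∩ T, q t ∈ Ω) ∧ DeltaAC T a b q ∧ q t₀ = q₀ ∧
    ∀ᵐ t ∂((deltaMeasure T).restrict (Ico a b ∩ T)),
      HasDeltaDerivAt T q (f (q (tsSigma T t)) t) t

/-- `I_𝕋 ∈ 𝕀`: `I` is a real interval containing points `a, b` of `T` with `a ⊴ t₀ ⊴ b`. -/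
def MemI (T : Set ℝ) (t₀ : ℝ) (I : Set ℝ) : Prop :=
  I.OrdConnected ∧ ∃ a ∈ I ∩ T, ∃ b ∈ I ∩ T, Trile T t₀ a b

/-- `(q, I_𝕋)` is a solution of (Δ-CP). -/
def IsSol {n : ℕ} (T : Set ℝ) (Ω : Set (EuclideanSpace ℝ (Fin n)))
    (f : EuclideanSpace ℝ (Fin n) → ℝ → EuclideanSpace ℝ (Fin n))
    (t₀ : ℝ) (q₀ : EuclideanSpace ℝ (Fin n))
    (q : ℝ → EuclideanSpace ℝ (Fin n)) (I : Set ℝ) : Prop :=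
  MemI T t₀ I ∧ (∀ t ∈ I ∩ T, q t ∈ Ω) ∧
    ∀ a ∈ I ∩ T, ∀ b ∈ I ∩ T, Trile T t₀ a b → IsSolIcc T Ω f t₀ q₀ q a b

/-- `(q, I_𝕋)` is a solution of (Δ-CP^σ). -/
def IsSolS {n : ℕ} (T : Set ℝ) (Ω : Set (EuclideanSpace ℝ (Fin n)))
    (f : EuclideanSpace ℝ (Fin n) → ℝ → EuclideanSpace ℝ (Fin n))
    (t₀ : ℝ) (q₀ : EuclideanSpace ℝ (Fin n))
    (q : ℝ → EuclideanSpace ℝ (Fin n)) (I : Set ℝ) : Prop :=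
  MemI T t₀ I ∧ (∀ t ∈ I ∩ T, q t ∈ Ω) ∧
    ∀ a ∈ I ∩ T, ∀ b ∈ I ∩ T, Trile T t₀ a b → IsSolIccS T Ω f t₀ q₀ q a b

/-- `(q₁, I₁_𝕋)` is an extension of `(q, I_𝕋)`. -/
def SolExtends {n : ℕ} (T : Set ℝ) (q₁ : ℝ → EuclideanSpace ℝ (Fin n)) (I₁ : Set ℝ)
    (q : ℝ → EuclideanSpace ℝ (Fin n)) (I : Set ℝ) : Prop :=
  I ∩ T ⊆ I₁ ∩ T ∧ EqOn q₁ q (I ∩ T)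

/-- `(q, I_𝕋)` is a maximal solution of (Δ-CP). -/
def IsMaxSol {n : ℕ} (T : Set ℝ) (Ω : Set (EuclideanSpace ℝ (Fin n)))
    (f : EuclideanSpace ℝ (Fin n) → ℝ → EuclideanSpace ℝ (Fin n))
    (t₀ : ℝ) (q₀ : EuclideanSpace ℝ (Fin n))
    (q : ℝ → EuclideanSpace ℝ (Fin n)) (I : Set ℝ) : Prop :=
  IsSol T Ω f t₀ q₀ q I ∧
    ∀ q₁ I₁, IsSol T Ω f t₀ q₀ q₁ I₁ → SolExtends T q₁ I₁ q I → I₁ ∩ T = I ∩ T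

/-- `(q, I_𝕋)` is a maximal solution of (Δ-CP^σ). -/
def IsMaxSolS {n : ℕ} (T : Set ℝ) (Ω : Set (EuclideanSpace ℝ (Fin n)))
    (f : EuclideanSpace ℝ (Fin n) → ℝ → EuclideanSpace ℝ (Fin n))
    (t₀ : ℝ) (q₀ : EuclideanSpace ℝ (Fin n))
    (q : ℝ → EuclideanSpace ℝ (Fin n)) (I : Set ℝ) : Prop :=
  IsSolS T Ω f t₀ q₀ q I ∧
    ∀ q₁ I₁, IsSolS T Ω f t₀ q₀ q₁ I₁ → SolExtends T q₁ I₁ q I → I₁ ∩ T = I ∩ T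

theorem tsSigma_le {T : Set ℝ} {r s : ℝ} (hs : s ∈ T) (hrs : r < s) : tsSigma T r ≤ s := by
  have hne : ({u | u ∈ T ∧ r < u}).Nonempty := ⟨s, hs, hrs⟩
  rw [tsSigma, if_pos hne]
  exact csInf_le ⟨r, fun u hu => hu.2.le⟩ ⟨hs, hrs⟩

theorem Ico_inter_subset_tsUpDomain {T : Set ℝ} {a b : ℝ} (hb : b ∈ T) :
    Ico a b ∩ T ⊆ tsUpDomain T :=
  fun _ hx => ⟨hx.2, fun h => (h.2 hb).not_gt hx.1.2⟩

/-- Comparison of the Δ-integral with the Lebesgue integral: for monotone `h`, each atom `μ(r) h(r)`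
is at most the Lebesgue integral of `h` over the gap `(r, σ(r))`. -/
theorem setLIntegral_delta_le {T : Set ℝ} (hT : IsClosed T) {a b : ℝ} (hb : b ∈ T)
    {h : ℝ → ENNReal} (hh : Monotone h) :
    ∫⁻ τ in Ico a b ∩ T, h τ ∂(deltaMeasure T) ≤ ∫⁻ s in Ico a b, h s := by
  have hS : MeasurableSet (Ico a b ∩ T) := measurableSet_Ico.inter hT.measurableSet
  -- `A r` is the gap to the right of `r`, discarded when `r` lies outside `[a,b)`.
  let A : {t : ℝ // t ∈ T ∧ RightScattered T t} → Set ℝ := fun r =>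
    if r.1 ∈ Ico a b then Ioo r.1 (tsSigma T r.1) else ∅
  let ν : Measure ℝ := volume.withDensity h
  have hA : ∀ r, MeasurableSet (A r) := by
    intro r
    by_cases hr : r.1 ∈ Ico a b
    · simp only [A, if_pos hr]; exact measurableSet_Ioo
    · simp only [A, if_neg hr]; exact MeasurableSet.empty
  have hmemA : ∀ r x, x ∈ A r → r.1 ∈ Ico a b ∧ r.1 < x ∧ x < tsSigma T r.1 := by
    intro r x hx
    by_cases hr : r.1 ∈ Ico a b
    · simp only [A, if_pos hr] at hx; exact ⟨hr, hx.1, hx.2⟩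
    · simp only [A, if_neg hr] at hx; exact absurd hx (notMem_empty x)
  have hdisj : Pairwise (Function.onFun Disjoint A) := by
    intro r s hrs
    refine Set.disjoint_left.2 fun x hx hy => ?_
    obtain ⟨-, h1, h2⟩ := hmemA r x hx
    obtain ⟨-, h3, h4⟩ := hmemA s x hy
    rcases lt_trichotomy r.1 s.1 with hlt | heq | hgt
    · linarith [tsSigma_le s.2.1 hlt]
    · exact hrs (Subtype.ext heq)
    · linarith [tsSigma_le r.2.1 hgt]
  have hatom : ∀ r : {t : ℝ // t ∈ T ∧ RightScattered T t},
      ∫⁻ τ in Ico a b ∩ T, h τ ∂(ENNReal.ofReal (tsGrain T r.1) • Measure.dirac r.1) ≤ ν (A r) := by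
    intro r
    rw [Measure.restrict_smul, lintegral_smul_measure, setLIntegral_dirac]
    by_cases hr : r.1 ∈ Ico a b
    · rw [if_pos ⟨hr, r.2.1⟩, smul_eq_mul]
      simp only [ν, A, if_pos hr]
      rw [withDensity_apply _ measurableSet_Ioo]
      calc ENNReal.ofReal (tsGrain T r.1) * h r.1
          = ∫⁻ _ in Ioo r.1 (tsSigma T r.1), h r.1 := by
            rw [setLIntegral_const, Real.volume_Ioo, mul_comm]; rfl
        _ ≤ _ := setLIntegral_mono hh.measurable fun x hx => hh hx.1.le
    · rw [if_neg fun hc => hr hc.1]; simp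
  have hsub : (⋃ r, A r) ⊆ Ico a b \ T := by
    refine iUnion_subset fun r x hx => ?_
    obtain ⟨h0, h1, h2⟩ := hmemA r x hx
    refine ⟨⟨h0.1.trans h1.le, h2.trans_le (tsSigma_le hb h0.2)⟩, fun hxT => ?_⟩
    linarith [tsSigma_le hxT h1]
  have hvol : ∫⁻ τ in Ico a b ∩ T, h τ ∂(volume.restrict T) = ν (Ico a b ∩ T) := by
    rw [withDensity_apply _ hS, Measure.restrict_restrict hS, inter_assoc, inter_self]
  rw [deltaMeasure, Measure.restrict_add, lintegral_add_measure, Measure.restrict_sum _ hS,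
    lintegral_sum_measure, hvol]
  calc ν (Ico a b ∩ T) + ∑' r : {t : ℝ // t ∈ T ∧ RightScattered T t}, _
      ≤ ν (Ico a b ∩ T) + ∑' r, ν (A r) := by
        gcongr with r
        exact hatom r
    _ ≤ ν (Ico a b ∩ T) + ν (Ico a b \ T) := by
        gcongr
        exact (tsum_meas_le_meas_iUnion_of_disjoint ν hA hdisj).trans (measure_mono hsub)
    _ = ν (Ico a b) := measure_inter_add_sdiff _ hT.measurableSet
    _ = _ := withDensity_apply _ measurableSet_Ico

theorem deltaMeasure_Ico_le {T : Set ℝ} (hT : IsClosed T) {a b : ℝ} (hb : b ∈ T) :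
    deltaMeasure T (Ico a b ∩ T) ≤ ENNReal.ofReal (b - a) := by
  simpa using setLIntegral_delta_le (a := a) hT hb (h := fun _ => 1) monotone_const

theorem setLIntegral_delta_pow_le {T : Set ℝ} (hT : IsClosed T) {a b : ℝ} (hb : b ∈ T)
    (hab : a ≤ b) {c : ℝ} (hc : 0 ≤ c) (k : ℕ) :
    ∫⁻ τ in Ico a b ∩ T, ENNReal.ofReal c * ENNReal.ofReal (τ - a) ^ k ∂(deltaMeasure T)
      ≤ ENNReal.ofReal (c / (k + 1) * (b - a) ^ (k + 1)) := by
  refine (setLIntegral_delta_le hT hb ?_).trans (le_of_eq ?_)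
  · intro x y hxy
    dsimp only
    gcongr
  · have hint : IntegrableOn (fun s : ℝ => c * (s - a) ^ k) (Ioc a b) :=
      (Continuous.integrableOn_Icc (by fun_prop)).mono_set Ioc_subset_Icc_self
    have hcongr : ∫⁻ s in Ico a b, ENNReal.ofReal c * ENNReal.ofReal (s - a) ^ k
        = ∫⁻ s in Ico a b, ENNReal.ofReal (c * (s - a) ^ k) := by
      refine setLIntegral_congr_fun measurableSet_Ico fun s hs => ?_
      have : 0 ≤ s - a := sub_nonneg.2 hs.1
      simp only [ENNReal.ofReal_mul hc, ENNReal.ofReal_pow this]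
    rw [hcongr, setLIntegral_congr Ico_ae_eq_Ioc, ← ofReal_integral_eq_lintegral_ofReal hint]
    · rw [← intervalIntegral.integral_of_le hab, intervalIntegral.integral_const_mul,
        intervalIntegral.integral_comp_sub_right (fun x => x ^ k) a, integral_pow]
      congr 1
      simp
      ring
    · filter_upwards [ae_restrict_mem measurableSet_Ioc] with s hs
      have : 0 ≤ s - a := sub_nonneg.2 hs.1.le
      simp only [Pi.zero_apply]
      positivity

/-- Superposition of a Carathéodory function with a measurable one is measurable: clear for simple
functions, and in general by approximating `q` pointwise and using continuity in the first variable. -/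
theorem aemeasurable_caratheodory {n : ℕ} {μ : Measure ℝ}
    {f : EuclideanSpace ℝ (Fin n) → ℝ → EuclideanSpace ℝ (Fin n)}
    (hm : ∀ x, AEMeasurable (f x) μ) (hc : ∀ᵐ t ∂μ, Continuous fun x => f x t)
    {q : ℝ → EuclideanSpace ℝ (Fin n)} (hq : AEMeasurable q μ) :
    AEMeasurable (fun t => f (q t) t) μ := by
  have hs : ∀ s : SimpleFunc ℝ (EuclideanSpace ℝ (Fin n)),
      AEMeasurable (fun t => f (s t) t) μ := by
    intro s
    have : (fun t => f (s t) t)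
        = fun t => ∑ x ∈ s.range, (s ⁻¹' {x}).indicator (f x) t := by
      funext t
      rw [Finset.sum_eq_single (s t)]
      · simp
      · intro x _ hx
        have hnot : t ∉ s ⁻¹' {x} := fun h => hx (mem_singleton_iff.1 h).symm
        exact Set.indicator_of_notMem hnot (f x)
      · intro h
        exact absurd (s.mem_range_self t) h
    rw [this]
    exact Finset.aemeasurable_fun_sum _ fun x _ => (hm x).indicator (s.measurableSet_fiber x)
  obtain ⟨g, hg, hqg⟩ := hq.aestronglyMeasurable
  refine aemeasurable_of_tendsto_metrizable_ae' (fun m => hs (hg.approx m)) ?_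
  filter_upwards [hc, hqg] with t ht hqt
  rw [hqt]
  exact (ht.tendsto (g t)).comp (hg.tendsto_approx t)

/-- For `q` continuous on `𝕋`, the integrand `τ ↦ f (q τ) τ` is measurable and essentially bounded
on `𝕋 \ {max 𝕋}`, which is written as `[t₀, b)_𝕋` with `b = max 𝕋`. -/
theorem integrand_bound {n : ℕ} {T : Set ℝ} (hTc : IsCompact T)
    {t₀ b : ℝ} (hmin : IsLeast T t₀) (hmax : IsGreatest T b) (hlt : t₀ < b)
    {f : EuclideanSpace ℝ (Fin n) → ℝ → EuclideanSpace ℝ (Fin n)}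
    (hf : DeltaCaratheodory T univ f) (hinf : HInfty T univ f)
    {q : ℝ → EuclideanSpace ℝ (Fin n)} (hq : ContinuousOn q T) :
    AEStronglyMeasurable (fun τ => f (q τ) τ) ((deltaMeasure T).restrict (Ico t₀ b ∩ T)) ∧
    ∃ M : ℝ, 0 ≤ M ∧ ∀ᵐ τ ∂((deltaMeasure T).restrict (Ico t₀ b ∩ T)), ‖f (q τ) τ‖ ≤ M := by
  have hT := hTc.isClosed
  have hS : MeasurableSet (Ico t₀ b ∩ T) := measurableSet_Ico.inter hT.measurableSet
  have hle : (deltaMeasure T).restrict (Ico t₀ b ∩ T)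
      ≤ (deltaMeasure T).restrict (tsUpDomain T) :=
    Measure.restrict_mono (Ico_inter_subset_tsUpDomain hmax.1) le_rfl
  constructor
  · refine (aemeasurable_caratheodory (fun x => (hf.1 x (mem_univ x)).mono_measure hle) ?_
      ?_).aestronglyMeasurable
    · filter_upwards [ae_mono hle hf.2] with t ht
      exact continuousOn_univ.1 ht
    · exact (hq.mono inter_subset_right).aemeasurable hS
  · obtain ⟨M, hM, h⟩ := hinf (q '' T) (subset_univ _) (hTc.image_of_continuousOn hq)
      t₀ hmin.1 b hmax.1 hlt
    refine ⟨M, hM, ?_⟩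
    filter_upwards [h, ae_restrict_mem hS] with τ hτ hmem
    exact hτ _ (mem_image_of_mem q hmem.2)

theorem integrableOn_integrand {n : ℕ} {T : Set ℝ} (hTc : IsCompact T)
    {t₀ b : ℝ} (hmin : IsLeast T t₀) (hmax : IsGreatest T b) (hlt : t₀ < b)
    {f : EuclideanSpace ℝ (Fin n) → ℝ → EuclideanSpace ℝ (Fin n)}
    (hf : DeltaCaratheodory T univ f) (hinf : HInfty T univ f)
    {q : ℝ → EuclideanSpace ℝ (Fin n)} (hq : ContinuousOn q T) :
    IntegrableOn (fun τ => f (q τ) τ) (Ico t₀ b ∩ T) (deltaMeasure T) := by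
  obtain ⟨hm, M, -, hM⟩ := integrand_bound hTc hmin hmax hlt hf hinf hq
  exact IntegrableOn.of_bound
    ((deltaMeasure_Ico_le hTc.isClosed hmax.1).trans_lt ENNReal.ofReal_lt_top) hm M hM

/-- The Picard operator maps continuous functions to continuous (indeed Lipschitz) functions. -/
theorem continuousOn_picard {n : ℕ} {T : Set ℝ} (hTc : IsCompact T)
    {t₀ b : ℝ} (hmin : IsLeast T t₀) (hmax : IsGreatest T b) (hlt : t₀ < b)
    {f : EuclideanSpace ℝ (Fin n) → ℝ → EuclideanSpace ℝ (Fin n)}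
    (hf : DeltaCaratheodory T univ f) (hinf : HInfty T univ f)
    {q : ℝ → EuclideanSpace ℝ (Fin n)} (hq : ContinuousOn q T) (q₀ : EuclideanSpace ℝ (Fin n)) :
    ContinuousOn (fun t => q₀ + ∫ τ in Ico t₀ t ∩ T, f (q τ) τ ∂(deltaMeasure T)) T := by
  have hT := hTc.isClosed
  have hint := integrableOn_integrand hTc hmin hmax hlt hf hinf hq
  obtain ⟨-, M, hM0, hM⟩ := integrand_bound hTc hmin hmax hlt hf hinf hq
  have key : ∀ s ∈ T, ∀ t ∈ T, s ≤ t →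
      ‖(∫ τ in Ico t₀ t ∩ T, f (q τ) τ ∂(deltaMeasure T))
        - ∫ τ in Ico t₀ s ∩ T, f (q τ) τ ∂(deltaMeasure T)‖ ≤ M * (t - s) := by
    intro s hs t ht hst
    have hsplit : Ico t₀ t ∩ T = (Ico t₀ s ∩ T) ∪ (Ico s t ∩ T) := by
      rw [← union_inter_distrib_right, Ico_union_Ico_eq_Ico (hmin.2 hs) hst]
    have hdisj : Disjoint (Ico t₀ s ∩ T) (Ico s t ∩ T) :=
      Set.disjoint_left.2 fun x hx hy => (hx.1.2.trans_le hy.1.1).false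
    have hsub1 : Ico t₀ s ∩ T ⊆ Ico t₀ b ∩ T :=
      inter_subset_inter_left _ (Ico_subset_Ico_right (hmax.2 hs))
    have hsub2 : Ico s t ∩ T ⊆ Ico t₀ b ∩ T :=
      inter_subset_inter_left _ (Ico_subset_Ico (hmin.2 hs) (hmax.2 ht))
    rw [hsplit, setIntegral_union hdisj (measurableSet_Ico.inter hT.measurableSet)
      (hint.mono_set hsub1) (hint.mono_set hsub2), add_sub_cancel_left]
    have hmeas := deltaMeasure_Ico_le (a := s) hT ht
    refine (norm_setIntegral_le_of_norm_le_const_ae (hmeas.trans_lt ENNReal.ofReal_lt_top)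
      (ae_mono (Measure.restrict_mono hsub2 le_rfl) hM)).trans ?_
    gcongr
    exact ENNReal.toReal_le_of_le_ofReal (sub_nonneg.2 hst) hmeas
  refine (LipschitzOnWith.of_dist_le_mul (K := M.toNNReal) fun x hx y hy => ?_).continuousOn
  rw [dist_add_left, Real.coe_toNNReal M hM0]
  rcases le_total x y with h | h
  · rw [dist_comm, dist_eq_norm, dist_comm x y, Real.dist_eq, abs_of_nonneg (sub_nonneg.2 h)]
    exact key x hx y hy h
  · rw [dist_eq_norm, Real.dist_eq, abs_of_nonneg (sub_nonneg.2 h)]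
    exact key y hy x hx h

/-- One Picard step improves a bound `c (s - t₀)^k` to `L c / (k+1) (t - t₀)^(k+1)`. -/
theorem picard_step {n : ℕ} {T : Set ℝ} (hTc : IsCompact T)
    {t₀ b : ℝ} (hmin : IsLeast T t₀) (hmax : IsGreatest T b) (hlt : t₀ < b)
    {f : EuclideanSpace ℝ (Fin n) → ℝ → EuclideanSpace ℝ (Fin n)}
    (hf : DeltaCaratheodory T univ f) (hinf : HInfty T univ f)
    {L : ℝ} (hL : 0 ≤ L)
    (hlip : ∀ᵐ t ∂((deltaMeasure T).restrict (tsUpDomain T)),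
      ∀ x₁ x₂ : EuclideanSpace ℝ (Fin n), ‖f x₁ t - f x₂ t‖ ≤ L * ‖x₁ - x₂‖)
    {p₁ p₂ : ℝ → EuclideanSpace ℝ (Fin n)} (hp₁ : ContinuousOn p₁ T) (hp₂ : ContinuousOn p₂ T)
    {c : ℝ} (hc : 0 ≤ c) (k : ℕ) (hp : ∀ s ∈ T, ‖p₁ s - p₂ s‖ ≤ c * (s - t₀) ^ k)
    {t : ℝ} (ht : t ∈ T) :
    ‖(∫ τ in Ico t₀ t ∩ T, f (p₁ τ) τ ∂(deltaMeasure T))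
        - ∫ τ in Ico t₀ t ∩ T, f (p₂ τ) τ ∂(deltaMeasure T)‖
      ≤ L * c / (k + 1) * (t - t₀) ^ (k + 1) := by
  have hT := hTc.isClosed
  have hS : MeasurableSet (Ico t₀ t ∩ T) := measurableSet_Ico.inter hT.measurableSet
  have h0t : 0 ≤ t - t₀ := sub_nonneg.2 (hmin.2 ht)
  have hsub : Ico t₀ t ∩ T ⊆ Ico t₀ b ∩ T :=
    inter_subset_inter_left _ (Ico_subset_Ico_right (hmax.2 ht))
  have hle : (deltaMeasure T).restrict (Ico t₀ t ∩ T)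
      ≤ (deltaMeasure T).restrict (tsUpDomain T) :=
    Measure.restrict_mono (Ico_inter_subset_tsUpDomain ht) le_rfl
  rw [← integral_sub ((integrableOn_integrand hTc hmin hmax hlt hf hinf hp₁).mono_set hsub)
    ((integrableOn_integrand hTc hmin hmax hlt hf hinf hp₂).mono_set hsub)]
  have hnn : 0 ≤ L * c / (k + 1) * (t - t₀) ^ (k + 1) := by positivity
  rw [← ENNReal.ofReal_le_ofReal_iff hnn, ofReal_norm]
  refine (enorm_integral_le_lintegral_enorm _).trans
    (le_trans ?_ (setLIntegral_delta_pow_le hT ht (hmin.2 ht) (mul_nonneg hL hc) k))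
  refine lintegral_mono_ae ?_
  filter_upwards [ae_mono hle hlip, ae_restrict_mem hS] with τ hτ hmem
  have h0 : 0 ≤ τ - t₀ := sub_nonneg.2 hmem.1.1
  rw [← ofReal_norm, ← ENNReal.ofReal_pow h0, ← ENNReal.ofReal_mul (mul_nonneg hL hc)]
  refine ENNReal.ofReal_le_ofReal ((hτ _ _).trans ?_)
  rw [mul_assoc]
  exact mul_le_mul_of_nonneg_left (hp τ hmem.2) hL

theorem stmt18 {n : ℕ} (T : Set ℝ) (hTclosed : IsClosed T) (hTcompact : IsCompact T)
    (hTnontriv : T.Nontrivial)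
    (t₀ : ℝ) (hmin : IsLeast T t₀) (q₀ : EuclideanSpace ℝ (Fin n))
    (f : EuclideanSpace ℝ (Fin n) → ℝ → EuclideanSpace ℝ (Fin n))
    (hf : DeltaCaratheodory T (univ : Set (EuclideanSpace ℝ (Fin n))) f)
    (hinf : HInfty T (univ : Set (EuclideanSpace ℝ (Fin n))) f)
    (L : ℝ) (hL : 0 ≤ L)
    (hlip : ∀ᵐ t ∂((deltaMeasure T).restrict (tsUpDomain T)),
      ∀ x₁ x₂ : EuclideanSpace ℝ (Fin n), ‖f x₁ t - f x₂ t‖ ≤ L * ‖x₁ - x₂‖)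
    (F : (ℝ → EuclideanSpace ℝ (Fin n)) → (ℝ → EuclideanSpace ℝ (Fin n)))
    (hF : ∀ q t, F q t = q₀ + ∫ τ in Ico t₀ t ∩ T, f (q τ) τ ∂(deltaMeasure T))
    (k : ℕ) (hk : 1 ≤ k)
    (q₁ q₂ : ℝ → EuclideanSpace ℝ (Fin n)) (hq₁ : ContinuousOn q₁ T) (hq₂ : ContinuousOn q₂ T)
    (t : ℝ) (ht : t ∈ T) :
    ‖F^[k] q₁ t - F^[k] q₂ t‖
      ≤ L ^ k / (Nat.factorial k : ℝ) * (⨆ s : T, ‖q₁ (s : ℝ) - q₂ (s : ℝ)‖) * (t - t₀) ^ k := by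
  obtain ⟨b, hmax⟩ := hTcompact.exists_isGreatest hTnontriv.nonempty
  have hlt : t₀ < b := by
    obtain ⟨x, hx, y, hy, hxy⟩ := hTnontriv
    refine lt_of_le_of_ne (hmin.2 hmax.1) fun h => hxy ?_
    have := hmin.2 hx
    have := hmin.2 hy
    have := hmax.2 hx
    have := hmax.2 hy
    linarith
  have hFun : ∀ q, F q = fun t => q₀ + ∫ τ in Ico t₀ t ∩ T, f (q τ) τ ∂(deltaMeasure T) :=
    fun q => funext (hF q)
  have hcont : ∀ (q : ℝ → EuclideanSpace ℝ (Fin n)), ContinuousOn q T →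
      ∀ j : ℕ, ContinuousOn (F^[j] q) T := by
    intro q hq j
    induction j with
    | zero => exact hq
    | succ j ih =>
      rw [Function.iterate_succ_apply', hFun]
      exact continuousOn_picard hTcompact hmin hmax hlt hf hinf ih q₀
  set C : ℝ := ⨆ s : T, ‖q₁ (s : ℝ) - q₂ (s : ℝ)‖
  have hC0 : 0 ≤ C := Real.iSup_nonneg fun s => norm_nonneg _
  -- The supremum is a genuine one, since a continuous function on a compact set is bounded.
  have hbdd : BddAbove (range fun s : T => ‖q₁ (s : ℝ) - q₂ (s : ℝ)‖) := by
    have := hTcompact.bddAbove_image (hq₁.sub hq₂).norm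
    rwa [image_eq_range] at this
  have main : ∀ j : ℕ, ∀ s ∈ T, ‖F^[j] q₁ s - F^[j] q₂ s‖
      ≤ L ^ j / (Nat.factorial j : ℝ) * C * (s - t₀) ^ j := by
    intro j
    induction j with
    | zero =>
      intro s hs
      simpa using le_ciSup hbdd ⟨s, hs⟩
    | succ j ih =>
      intro s hs
      rw [Function.iterate_succ_apply', Function.iterate_succ_apply', hF, hF,
        add_sub_add_left_eq_sub]
      refine (picard_step hTcompact hmin hmax hlt hf hinf hL hlip (hcont q₁ hq₁ j)
        (hcont q₂ hq₂ j) (by positivity) j ih hs).trans (le_of_eq ?_)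
      rw [Nat.factorial_succ]
      push_cast
      field_simp
      ring
  exact main k t ht

end
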